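/- arXiv:math/9808058 — 5 statements merged into one kernel-verified Lean document; each statement's English description precedes it below -/
import Mathlib

section
/- The comultiplication Δ on F is coassociative: (Δ ⊗ 1) ∘ Δ = (1 ⊗ Δ) ∘ Δ as linear maps F → F ⊗ F ⊗ F. -/
/-!
Writing `Δ x^n` as a sum over all decompositions `n = a + b` (the terms with `a = 0` or `b = 0` are
zero, because `e k 0 = f k 0 = 0`), both composites send `e^n` to
`(1/4) Σ_{a+b+c=n} e^a ⊗ e^b ⊗ e^c`, and `f^n` to `1/4` times the sum of the three families in which
one of the three tensor factors `e` is replaced by `f`.  The two sides differ only in how the triple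
`(a, b, c)` is bracketed, and `sum_antidiagonal_assoc` identifies the two bracketings.
-/

/-!
Let `k` be a field with `char k ≠ 2`.  `F` is the free `k`-vector space with basis
`{e^i : i ≥ 1} ∪ {f^i : i ≥ 1}` (the first component `false`/`true` distinguishes the
`e`/`f` family).  The comultiplication `Δ : F → F ⊗ F` is given on basis elements by
`Δe^n = -(1/2)·Σ_{i=1}^{n-1} e^i ⊗ e^{n-i}` and
`Δf^n = -(1/2)·Σ_{i=1}^{n-1} (f^i ⊗ e^{n-i} + e^i ⊗ f^{n-i})`.

STATEMENT: `Δ` is coassociative: `(Δ ⊗ 1) ∘ Δ = (1 ⊗ Δ) ∘ Δ` as linear maps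
`F → F ⊗ F ⊗ F` (composing with the associator on the left-hand side).
-/

open scoped TensorProduct

namespace Stmt0

/-- The basis: `(false, n)` is `e^n`, `(true, n)` is `f^n`, for `n ≥ 1`. -/
abbrev B : Type := Bool × {n : ℕ // 1 ≤ n}

/-- The free vector space on `B`. -/
abbrev F (k : Type*) [Field k] : Type _ := B →₀ k

/-- `e^n` (zero if `n < 1`, but it is only used for `n ≥ 1`). -/
noncomputable def e (k : Type*) [Field k] (n : ℕ) : F k :=
  if h : 1 ≤ n then Finsupp.single (false, ⟨n, h⟩) 1 else 0

/-- `f^n` (zero if `n < 1`, but it is only used for `n ≥ 1`). -/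
noncomputable def f (k : Type*) [Field k] (n : ℕ) : F k :=
  if h : 1 ≤ n then Finsupp.single (true, ⟨n, h⟩) 1 else 0

/-- The value of the comultiplication on basis elements. -/
noncomputable def DeltaTarget (k : Type*) [Field k] : B → F k ⊗[k] F k
  | (false, n) => (-(1/2 : k)) •
      ∑ i ∈ Finset.Ico 1 (n : ℕ), e k i ⊗ₜ[k] e k ((n : ℕ) - i)
  | (true, n) => (-(1/2 : k)) •
      ∑ i ∈ Finset.Ico 1 (n : ℕ),
        (f k i ⊗ₜ[k] e k ((n : ℕ) - i) + e k i ⊗ₜ[k] f k ((n : ℕ) - i))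

/-- The comultiplication `Δ : F → F ⊗ F`, the unique linear extension of `DeltaTarget`. -/
noncomputable def Delta (k : Type*) [Field k] : F k →ₗ[k] F k ⊗[k] F k :=
  Finsupp.lsum k fun b => LinearMap.toSpanSingleton k (F k ⊗[k] F k) (DeltaTarget k b)

@[simp] lemma e_zero (k : Type*) [Field k] : e k 0 = 0 := by simp [e]

@[simp] lemma f_zero (k : Type*) [Field k] : f k 0 = 0 := by simp [f]

/-- The boundary terms vanish, so a sum over `1 ≤ i < n` is a sum over the whole antidiagonal. -/
lemma sum_Ico_eq_sum_antidiagonal {M : Type*} [AddCommMonoid M] (g : ℕ → ℕ → M)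
    (h₁ : ∀ i, g 0 i = 0) (h₂ : ∀ i, g i 0 = 0) (n : ℕ) :
    ∑ i ∈ Finset.Ico 1 n, g i (n - i) = ∑ p ∈ Finset.HasAntidiagonal.antidiagonal n, g p.1 p.2 := by
  rw [Finset.Nat.sum_antidiagonal_eq_sum_range_succ g]
  refine Finset.sum_subset (fun i hi => ?_) (fun i hi hi' => ?_)
  · simp only [Finset.mem_Ico, Finset.mem_range] at hi ⊢
    omega
  · simp only [Finset.mem_Ico, Finset.mem_range] at hi hi'
    obtain rfl | rfl : i = 0 ∨ i = n := by omega
    · exact h₁ _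
    · simpa using h₂ _

/-- The two ways of bracketing a decomposition of `n` into three summands give the same sum. -/
lemma sum_antidiagonal_assoc {M : Type*} [AddCommMonoid M] (g : ℕ → ℕ → ℕ → M) (n : ℕ) :
    ∑ p ∈ Finset.HasAntidiagonal.antidiagonal n, ∑ q ∈ Finset.HasAntidiagonal.antidiagonal p.1, g q.1 q.2 p.2 =
      ∑ p ∈ Finset.HasAntidiagonal.antidiagonal n, ∑ q ∈ Finset.HasAntidiagonal.antidiagonal p.2, g p.1 q.1 q.2 := by
  rw [Finset.sum_sigma', Finset.sum_sigma']
  refine Finset.sum_nbij' (fun x => ⟨(x.2.1, x.2.2 + x.1.2), (x.2.2, x.1.2)⟩)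
    (fun x => ⟨(x.1.1 + x.2.1, x.2.2), (x.1.1, x.2.1)⟩) ?_ ?_ ?_ ?_ ?_
  · rintro ⟨⟨a, b⟩, ⟨c, d⟩⟩ h
    simp only [Finset.mem_sigma, Finset.HasAntidiagonal.mem_antidiagonal] at h
    obtain ⟨rfl, rfl⟩ := h
    simp [add_assoc]
  · rintro ⟨⟨a, b⟩, ⟨c, d⟩⟩ h
    simp only [Finset.mem_sigma, Finset.HasAntidiagonal.mem_antidiagonal] at h
    obtain ⟨rfl, rfl⟩ := h
    simp [add_assoc]
  · rintro ⟨⟨a, b⟩, ⟨c, d⟩⟩ h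
    simp only [Finset.mem_sigma, Finset.HasAntidiagonal.mem_antidiagonal] at h
    obtain ⟨-, rfl⟩ := h
    rfl
  · rintro ⟨⟨a, b⟩, ⟨c, d⟩⟩ h
    simp only [Finset.mem_sigma, Finset.HasAntidiagonal.mem_antidiagonal] at h
    obtain ⟨-, rfl⟩ := h
    rfl
  · rintro ⟨⟨a, b⟩, ⟨c, d⟩⟩ h
    rfl

/-- The formula for `Δ e^n`; it also holds in the degenerate case `n = 0`, where both sides are
zero, so it applies to every term of a sum over an antidiagonal. -/
lemma Delta_e (k : Type*) [Field k] (n : ℕ) :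
    Delta k (e k n) =
      (-(1/2 : k)) • ∑ p ∈ Finset.HasAntidiagonal.antidiagonal n, e k p.1 ⊗ₜ[k] e k p.2 := by
  rcases Nat.eq_zero_or_pos n with rfl | hn
  · simp
  · rw [← sum_Ico_eq_sum_antidiagonal (fun i j => e k i ⊗ₜ[k] e k j) (by simp) (by simp)]
    rw [e, dif_pos (show 1 ≤ n from hn), Delta, Finsupp.lsum_single,
      LinearMap.toSpanSingleton_apply, one_smul, DeltaTarget]

/-- The formula for `Δ f^n`, valid for `n = 0` as well. -/
lemma Delta_f (k : Type*) [Field k] (n : ℕ) :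
    Delta k (f k n) =
      (-(1/2 : k)) • ∑ p ∈ Finset.HasAntidiagonal.antidiagonal n,
        (f k p.1 ⊗ₜ[k] e k p.2 + e k p.1 ⊗ₜ[k] f k p.2) := by
  rcases Nat.eq_zero_or_pos n with rfl | hn
  · simp
  · rw [← sum_Ico_eq_sum_antidiagonal
      (fun i j => f k i ⊗ₜ[k] e k j + e k i ⊗ₜ[k] f k j) (by simp) (by simp)]
    rw [f, dif_pos (show 1 ≤ n from hn), Delta, Finsupp.lsum_single,
      LinearMap.toSpanSingleton_apply, one_smul, DeltaTarget]

/-- `Δ` is coassociative. -/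
theorem Delta_coassoc (k : Type*) [Field k] (hchar : (2 : k) ≠ 0) :
    (TensorProduct.assoc k (F k) (F k) (F k)).toLinearMap ∘ₗ
        LinearMap.rTensor (F k) (Delta k) ∘ₗ Delta k =
      LinearMap.lTensor (F k) (Delta k) ∘ₗ Delta k := by
  refine Finsupp.lhom_ext' fun b => LinearMap.ext_ring ?_
  obtain ⟨_ | _, n, hn⟩ := b
  · have h : Finsupp.single ((false, ⟨n, hn⟩) : B) (1 : k) = e k n := by simp [e, hn]
    simp only [LinearMap.comp_apply, Finsupp.lsingle_apply, h, Delta_e, map_smul, map_sum,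
      LinearMap.rTensor_tmul, LinearMap.lTensor_tmul, LinearEquiv.coe_coe,
      ← TensorProduct.smul_tmul', TensorProduct.tmul_smul, TensorProduct.sum_tmul,
      TensorProduct.tmul_sum, TensorProduct.assoc_tmul, ← Finset.smul_sum]
    rw [sum_antidiagonal_assoc (fun a b c => e k a ⊗ₜ[k] (e k b ⊗ₜ[k] e k c))]
  · have h : Finsupp.single ((true, ⟨n, hn⟩) : B) (1 : k) = f k n := by simp [f, hn]
    simp only [LinearMap.comp_apply, Finsupp.lsingle_apply, h, Delta_e, Delta_f, map_smul, map_sum,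
      map_add, LinearMap.rTensor_tmul, LinearMap.lTensor_tmul, LinearEquiv.coe_coe,
      ← TensorProduct.smul_tmul', TensorProduct.tmul_smul, TensorProduct.sum_tmul,
      TensorProduct.tmul_sum, TensorProduct.add_tmul, TensorProduct.tmul_add,
      TensorProduct.assoc_tmul, ← Finset.smul_sum, Finset.sum_add_distrib, ← smul_add]
    rw [sum_antidiagonal_assoc (fun a b c => f k a ⊗ₜ[k] (e k b ⊗ₜ[k] e k c)),
      sum_antidiagonal_assoc (fun a b c => e k a ⊗ₜ[k] (f k b ⊗ₜ[k] e k c)),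
      sum_antidiagonal_assoc (fun a b c => e k a ⊗ₜ[k] (e k b ⊗ₜ[k] f k c)), add_assoc]

end Stmt0
end

section
/- The linear span of all products x·y with x, y ∈ G equals the linear span of {e_k : k ≥ 2} ∪ {f_k : k ≥ 2}. Consequently, the images of e_1 and f_1 form a basis of the quotient G/G². -/
/-!
Bilinearity reduces products to products of basis elements, which are multiples of some `e_n` or
`f_n` with `n = a + b ≥ 2` (`mul_mem`). Conversely, since `-(1/2)` is invertible, `e_n` and `f_n`
with `n ≥ 2` are multiples of `e_{n-1} · e_1` and `e_{n-1} · f_1`; hence the description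
of `G²` (`Gsq_eq`). The coordinates `coord` along `e_1` and `f_1` thus vanish on `G²` and descend to
a map `G/G² → k²` which sends the two classes to the standard basis; this gives
independence. The two classes span because all other basis elements lie in `G²`.
-/

/-!
Let `k` be a field with `char k ≠ 2`.  `G` is the free `k`-vector space with basis
`{e_k : k ≥ 1} ∪ {f_k : k ≥ 1}` (the first component `false`/`true` distinguishes the
`e`/`f` family), equipped with the bilinear multiplication determined on basis elements by
`e_k·e_l = -(1/2)·e_{k+l}`, `e_k·f_l = f_k·e_l = -(1/2)·f_{k+l}`, `f_k·f_l = 0`.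

STATEMENT: the span of all products `x·y` equals the span of `{e_k, f_k : k ≥ 2}`, and the images of `e_1` and `f_1` form a basis (linearly independent and spanning) of `G/G²`.
-/

namespace Stmt5

/-- The basis: `(false, n)` is `e_n`, `(true, n)` is `f_n`, for `n ≥ 1`. -/
abbrev B : Type := Bool × {n : ℕ // 1 ≤ n}

/-- The free vector space on `B`. -/
abbrev G (k : Type*) [Field k] : Type _ := B →₀ k

/-- `e_n` (zero if `n < 1`, but it is only used for `n ≥ 1`). -/
noncomputable def e (k : Type*) [Field k] (n : ℕ) : G k :=
  if h : 1 ≤ n then Finsupp.single (false, ⟨n, h⟩) 1 else 0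

/-- `f_n` (zero if `n < 1`, but it is only used for `n ≥ 1`). -/
noncomputable def f (k : Type*) [Field k] (n : ℕ) : G k :=
  if h : 1 ≤ n then Finsupp.single (true, ⟨n, h⟩) 1 else 0

/-- The product of two basis elements. -/
noncomputable def mulB (k : Type*) [Field k] : B → B → G k
  | (false, a), (false, b) => (-(1/2 : k)) • e k (a.1 + b.1)
  | (false, a), (true, b) => (-(1/2 : k)) • f k (a.1 + b.1)
  | (true, a), (false, b) => (-(1/2 : k)) • f k (a.1 + b.1)
  | (true, _), (true, _) => 0

/-- Multiplication by the basis element `a` on the left, as a linear map. -/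
noncomputable def mulRight (k : Type*) [Field k] (a : B) : G k →ₗ[k] G k :=
  Finsupp.lsum k fun b => LinearMap.toSpanSingleton k (G k) (mulB k a b)

/-- The bilinear multiplication on `G`, the unique bilinear extension of `mulB`. -/
noncomputable def mul (k : Type*) [Field k] : G k →ₗ[k] G k →ₗ[k] G k :=
  Finsupp.lsum k fun a => LinearMap.toSpanSingleton k (G k →ₗ[k] G k) (mulRight k a)

/-- `G² `: the linear span of all products of two elements of `G`. -/
noncomputable def Gsq (k : Type*) [Field k] : Submodule k (G k) :=
  Submodule.span k {z : G k | ∃ x y : G k, z = mul k x y}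

/-- The images of `e_1` and `f_1` in `G/G²` (`false ↦ e_1`, `true ↦ f_1`). -/
noncomputable def quotFam (k : Type*) [Field k] : Bool → G k ⧸ Gsq k := fun b =>
  Submodule.Quotient.mk (if b then f k 1 else e k 1)

theorem mul_single (k : Type*) [Field k] (a b : B) (r s : k) :
    mul k (Finsupp.single a r) (Finsupp.single b s) = r • s • mulB k a b := by
  simp [mul, mulRight]

theorem mulB_mem (k : Type*) [Field k] (a b : B) :
    mulB k a b ∈
      Submodule.span k {z : G k | ∃ n : ℕ, 2 ≤ n ∧ (z = e k n ∨ z = f k n)} := by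
  obtain ⟨i, a, ha⟩ := a
  obtain ⟨j, b, hb⟩ := b
  have h2 : 2 ≤ a + b := by omega
  cases i <;> cases j <;> simp only [mulB]
  · exact Submodule.smul_mem _ _ (Submodule.subset_span ⟨_, h2, Or.inl rfl⟩)
  · exact Submodule.smul_mem _ _ (Submodule.subset_span ⟨_, h2, Or.inr rfl⟩)
  · exact Submodule.smul_mem _ _ (Submodule.subset_span ⟨_, h2, Or.inr rfl⟩)
  · exact Submodule.zero_mem _

theorem mul_mem (k : Type*) [Field k] (x y : G k) :
    mul k x y ∈
      Submodule.span k {z : G k | ∃ n : ℕ, 2 ≤ n ∧ (z = e k n ∨ z = f k n)} := by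
  induction x using Finsupp.induction_linear with
  | zero => simp
  | add x x' hx hx' => simpa using Submodule.add_mem _ hx hx'
  | single a r =>
    induction y using Finsupp.induction_linear with
    | zero => simp
    | add y y' hy hy' => simpa using Submodule.add_mem _ hy hy'
    | single b s =>
      rw [mul_single]
      exact Submodule.smul_mem _ _ (Submodule.smul_mem _ _ (mulB_mem k a b))

theorem e_mem_Gsq (k : Type*) [Field k] (hchar : (2 : k) ≠ 0) {n : ℕ} (hn : 2 ≤ n) :
    e k n ∈ Gsq k := by
  have h : e k n = mul k (Finsupp.single (false, ⟨n - 1, by omega⟩) (-2))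
      (Finsupp.single (false, ⟨1, le_rfl⟩) 1) := by
    rw [mul_single]
    simp [mulB, smul_smul, hchar, Nat.sub_add_cancel (show 1 ≤ n by omega)]
  exact Submodule.subset_span ⟨_, _, h⟩

theorem f_mem_Gsq (k : Type*) [Field k] (hchar : (2 : k) ≠ 0) {n : ℕ} (hn : 2 ≤ n) :
    f k n ∈ Gsq k := by
  have h : f k n = mul k (Finsupp.single (false, ⟨n - 1, by omega⟩) (-2))
      (Finsupp.single (true, ⟨1, le_rfl⟩) 1) := by
    rw [mul_single]
    simp [mulB, smul_smul, hchar, Nat.sub_add_cancel (show 1 ≤ n by omega)]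
  exact Submodule.subset_span ⟨_, _, h⟩

theorem Gsq_eq (k : Type*) [Field k] (hchar : (2 : k) ≠ 0) :
    Gsq k = Submodule.span k {z : G k | ∃ n : ℕ, 2 ≤ n ∧ (z = e k n ∨ z = f k n)} := by
  apply le_antisymm
  · refine Submodule.span_le.2 ?_
    rintro _ ⟨x, y, rfl⟩
    exact mul_mem k x y
  · refine Submodule.span_le.2 ?_
    rintro _ ⟨n, hn, rfl | rfl⟩
    · exact e_mem_Gsq k hchar hn
    · exact f_mem_Gsq k hchar hn

/-- The coordinates along `e_1` (index `false`) and `f_1` (index `true`). -/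
noncomputable def coord (k : Type*) [Field k] : G k →ₗ[k] (Bool → k) :=
  LinearMap.pi fun b => Finsupp.lapply (b, ⟨1, le_rfl⟩)

theorem Gsq_le_ker_coord (k : Type*) [Field k] (hchar : (2 : k) ≠ 0) :
    Gsq k ≤ LinearMap.ker (coord k) := by
  rw [Gsq_eq k hchar, Submodule.span_le]
  rintro _ ⟨n, hn, rfl | rfl⟩ <;>
  · have h1 : 1 ≤ n := by omega
    have h2 : n ≠ 1 := by omega
    ext b
    simp only [coord, e, f, h1, dite_true, LinearMap.pi_apply, Finsupp.lapply_apply,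
      Pi.zero_apply]
    exact Finsupp.single_eq_of_ne' fun h => h2 (congrArg (fun p : B => p.2.1) h)

/-- `G²` is the span of `{e_k : k ≥ 2} ∪ {f_k : k ≥ 2}`, and the images of `e_1` and
`f_1` are linearly independent and span the quotient `G/G²`, i.e. they form a basis. -/
theorem span_products (k : Type*) [Field k] (hchar : (2 : k) ≠ 0) :
    Gsq k = Submodule.span k {z : G k | ∃ n : ℕ, 2 ≤ n ∧ (z = e k n ∨ z = f k n)} ∧
      LinearIndependent k (quotFam k) ∧
      Submodule.span k (Set.range (quotFam k)) = ⊤ := by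
  refine ⟨Gsq_eq k hchar, ?_, ?_⟩
  · apply LinearIndependent.of_comp ((Gsq k).liftQ (coord k) (Gsq_le_ker_coord k hchar))
    have hcomp : (Gsq k).liftQ (coord k) (Gsq_le_ker_coord k hchar) ∘ quotFam k =
        fun b => Pi.single b 1 := by
      funext b c
      cases b <;> cases c <;> simp [quotFam, coord, e, f, Finsupp.single_apply]
      all_goals exact fun h => absurd (congrArg Prod.fst h) (by decide)
    rw [hcomp]
    exact Pi.linearIndependent_single_one Bool k
  · rw [eq_top_iff]
    rintro q -
    obtain ⟨x, rfl⟩ := Submodule.Quotient.mk_surjective _ q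
    induction x using Finsupp.induction_linear with
    | zero => simp
    | add x y hx hy => simpa using Submodule.add_mem _ hx hy
    | single a r =>
      obtain ⟨i, n, hn⟩ := a
      have hr : (Finsupp.single (i, ⟨n, hn⟩) r : G k) = r • (if i then f k n else e k n) := by
        cases i <;> simp [e, f, hn]
      rw [hr, Submodule.Quotient.mk_smul]
      apply Submodule.smul_mem
      rcases hn.eq_or_lt with rfl | h2
      · exact Submodule.subset_span ⟨i, rfl⟩
      · have hz : (if i then f k n else e k n) ∈ Gsq k := by
          cases i
          · exact e_mem_Gsq k hchar h2
          · exact f_mem_Gsq k hchar h2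
        rw [(Submodule.Quotient.mk_eq_zero _).2 hz]
        exact Submodule.zero_mem _

end Stmt5
end

section
/- The linear map Φ : G → A determined by Φ(e_k) = (-2)^{k-1}·X^k and Φ(f_k) = (-2)^{k-1}·X^{k-1}·ε is an injective homomorphism of non-unital k-algebras (Φ(x·y) = Φ(x)·Φ(y) for all x, y ∈ G), and its image is the non-unital subalgebra of A generated by X and ε. In particular, G is isomorphic as a non-unital commutative k-algebra to the ideal generated by X and ε in k[X][ε]/(ε²) spanned by polynomials. -/
/-!
On basis elements the factor `-1/2` in the product of `G` is exactly what turns `(-2)^{a+b-1}`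
into `(-2)^{a-1} (-2)^{b-1}`, so `Φ` is multiplicative there (`Phi_mulB`), hence everywhere by
bilinearity.  `Φ` is injective because it sends the basis to nonzero multiples of distinct
elements of the monomial basis `{X^i} ∪ {X^i ε}` of `A`: the coordinates of `x` are read off,
up to powers of `-2`, from the coefficients of the two components of `Φ x`
(`fst_coeff_Phi`, `snd_coeff_Phi`).
For the image, `Φ(e_n)` and `Φ(f_n)` are multiples of `X^n` and `X^{n-1} ε`, which are products of
the generators; conversely the range is closed under products and contains `X = Φ(e_1)` and
`ε = Φ(f_1)`.
-/

/-!
Let `k` be a field with `char k ≠ 2`.  `G` is the free `k`-vector space with basis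
`{e_k : k ≥ 1} ∪ {f_k : k ≥ 1}` (the first component `false`/`true` distinguishes the
`e`/`f` family), equipped with the bilinear multiplication determined on basis elements by
`e_k·e_l = -(1/2)·e_{k+l}`, `e_k·f_l = f_k·e_l = -(1/2)·f_{k+l}`, `f_k·f_l = 0`.

STATEMENT: with `A = k[X][ε]/(ε²)` (dual numbers over `k[X]`), the linear map `Φ : G → A` with `Φ(e_n) = (-2)^{n-1}·X^n`, `Φ(f_n) = (-2)^{n-1}·X^{n-1}·ε` is an injective homomorphism of non-unital `k`-algebras whose image is the non-unital subalgebra of `A` generated by `X` and `ε`.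
-/

namespace Stmt7

/-- The basis: `(false, n)` is `e_n`, `(true, n)` is `f_n`, for `n ≥ 1`. -/
abbrev B : Type := Bool × {n : ℕ // 1 ≤ n}

/-- The free vector space on `B`. -/
abbrev G (k : Type*) [Field k] : Type _ := B →₀ k

/-- `e_n` (zero if `n < 1`, but it is only used for `n ≥ 1`). -/
noncomputable def e (k : Type*) [Field k] (n : ℕ) : G k :=
  if h : 1 ≤ n then Finsupp.single (false, ⟨n, h⟩) 1 else 0

/-- `f_n` (zero if `n < 1`, but it is only used for `n ≥ 1`). -/
noncomputable def f (k : Type*) [Field k] (n : ℕ) : G k :=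
  if h : 1 ≤ n then Finsupp.single (true, ⟨n, h⟩) 1 else 0

/-- The product of two basis elements. -/
noncomputable def mulB (k : Type*) [Field k] : B → B → G k
  | (false, a), (false, b) => (-(1/2 : k)) • e k (a.1 + b.1)
  | (false, a), (true, b) => (-(1/2 : k)) • f k (a.1 + b.1)
  | (true, a), (false, b) => (-(1/2 : k)) • f k (a.1 + b.1)
  | (true, _), (true, _) => 0

/-- Multiplication by the basis element `a` on the left, as a linear map. -/
noncomputable def mulRight (k : Type*) [Field k] (a : B) : G k →ₗ[k] G k :=
  Finsupp.lsum k fun b => LinearMap.toSpanSingleton k (G k) (mulB k a b)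

/-- The bilinear multiplication on `G`, the unique bilinear extension of `mulB`. -/
noncomputable def mul (k : Type*) [Field k] : G k →ₗ[k] G k →ₗ[k] G k :=
  Finsupp.lsum k fun a => LinearMap.toSpanSingleton k (G k →ₗ[k] G k) (mulRight k a)

/-- `A = k[X][ε]/(ε²)`, the dual numbers over the polynomial ring `k[X]`. -/
abbrev A (k : Type*) [Field k] : Type _ := DualNumber (Polynomial k)

/-- The value of `Φ` on basis elements: `Φ(e_n) = (-2)^{n-1}·X^n` and
`Φ(f_n) = (-2)^{n-1}·X^{n-1}·ε`. -/
noncomputable def PhiB (k : Type*) [Field k] : B → A k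
  | (false, n) =>
      TrivSqZeroExt.inl ((-2 : Polynomial k) ^ (n.1 - 1) * Polynomial.X ^ n.1)
  | (true, n) =>
      TrivSqZeroExt.inr ((-2 : Polynomial k) ^ (n.1 - 1) * Polynomial.X ^ (n.1 - 1))

/-- The linear map `Φ : G → A` determined by `Φ(e_n) = (-2)^{n-1}·X^n`,
`Φ(f_n) = (-2)^{n-1}·X^{n-1}·ε`. -/
noncomputable def Phi (k : Type*) [Field k] : G k →ₗ[k] A k :=
  Finsupp.lsum k fun b => LinearMap.toSpanSingleton k (A k) (PhiB k b)

@[simp] lemma Phi_single (k : Type*) [Field k] (b : B) (c : k) :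
    Phi k (Finsupp.single b c) = c • PhiB k b := by
  simp [Phi]

@[simp] lemma mul_single (k : Type*) [Field k] (a b : B) (c d : k) :
    mul k (Finsupp.single a c) (Finsupp.single b d) = c • d • mulB k a b := by
  simp [mul, mulRight]

lemma Phi_e (k : Type*) [Field k] (n : ℕ) :
    Phi k (e k (n + 1)) = TrivSqZeroExt.inl ((-2) ^ n * Polynomial.X ^ (n + 1)) := by
  simp [e, PhiB]

lemma Phi_f (k : Type*) [Field k] (n : ℕ) :
    Phi k (f k (n + 1)) = TrivSqZeroExt.inr ((-2) ^ n * Polynomial.X ^ n) := by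
  simp [f, PhiB]

/-- The scalar identity `-1/2 · (-2) = 1`, in the form in which it acts on polynomials. -/
lemma half_smul (k : Type*) [Field k] (hchar : (2 : k) ≠ 0) (p : Polynomial k) :
    (-(1/2 : k)) • (-2 * p) = p := by
  have h : (-2 : Polynomial k) * p = (-2 : k) • p := by
    rw [Polynomial.smul_eq_C_mul, map_neg, map_ofNat]
  rw [h, smul_smul]
  have : (-(1/2 : k)) * -2 = 1 := by field_simp
  rw [this, one_smul]

/-- `Φ` is multiplicative on basis elements. -/
lemma Phi_mulB (k : Type*) [Field k] (hchar : (2 : k) ≠ 0) (a b : B) :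
    Phi k (mulB k a b) = PhiB k a * PhiB k b := by
  obtain ⟨s, a, ha⟩ := a
  obtain ⟨t, b, hb⟩ := b
  obtain ⟨a, rfl⟩ := Nat.exists_eq_add_of_le' ha
  obtain ⟨b, rfl⟩ := Nat.exists_eq_add_of_le' hb
  have hab : a + 1 + (b + 1) = (a + b + 1) + 1 := by ring
  cases s <;> cases t <;>
    simp only [mulB, PhiB, map_smul, map_zero, hab, Phi_e, Phi_f, Nat.add_sub_cancel]
  · rw [← TrivSqZeroExt.inl_smul, ← TrivSqZeroExt.inl_mul, pow_succ' (-2), mul_assoc,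
      half_smul k hchar]
    congr 1; ring
  · rw [← TrivSqZeroExt.inr_smul, TrivSqZeroExt.inl_mul_inr, pow_succ' (-2), mul_assoc,
      half_smul k hchar, smul_eq_mul]
    congr 1; ring
  · rw [← TrivSqZeroExt.inr_smul, TrivSqZeroExt.inr_mul_inl, pow_succ' (-2), mul_assoc,
      half_smul k hchar, op_smul_eq_mul]
    congr 1; ring
  · rw [TrivSqZeroExt.inr_mul_inr]

lemma Phi_mul (k : Type*) [Field k] (hchar : (2 : k) ≠ 0) (x y : G k) :
    Phi k (mul k x y) = Phi k x * Phi k y := by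
  induction x using Finsupp.induction_linear with
  | zero => simp
  | add x x' hx hx' => simp [hx, hx', add_mul]
  | single a c =>
    induction y using Finsupp.induction_linear with
    | zero => simp
    | add y y' hy hy' => simp [hy, hy', mul_add]
    | single b d =>
      rw [mul_single, map_smul, map_smul, Phi_mulB k hchar, Phi_single, Phi_single,
        smul_mul_assoc, mul_smul_comm]

lemma neg_two_pow_eq_C (k : Type*) [Field k] (n : ℕ) :
    (-2 : Polynomial k) ^ n = Polynomial.C ((-2) ^ n) := by
  rw [map_pow, map_neg, map_ofNat]

lemma fst_coeff_Phi (k : Type*) [Field k] (x : G k) (n : ℕ) (hn : 1 ≤ n) :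
    (Phi k x).fst.coeff n = (-2) ^ (n - 1) * x (false, ⟨n, hn⟩) := by
  induction x using Finsupp.induction_linear with
  | zero => simp
  | add x y hx hy => simp [hx, hy, mul_add]
  | single b c =>
    obtain ⟨s, m, hm⟩ := b
    cases s
    · rw [Phi_single, PhiB, neg_two_pow_eq_C, ← Polynomial.smul_eq_C_mul, Finsupp.single_apply]
      by_cases h : m = n
      · subst h
        simp [mul_comm]
      · simp [Polynomial.coeff_X_pow, h, Ne.symm h]
    · simp [PhiB]

lemma snd_coeff_Phi (k : Type*) [Field k] (x : G k) (n : ℕ) (hn : 1 ≤ n) :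
    (Phi k x).snd.coeff (n - 1) = (-2) ^ (n - 1) * x (true, ⟨n, hn⟩) := by
  induction x using Finsupp.induction_linear with
  | zero => simp
  | add x y hx hy => simp [hx, hy, mul_add]
  | single b c =>
    obtain ⟨s, m, hm⟩ := b
    cases s
    · simp [PhiB]
    · rw [Phi_single, PhiB, neg_two_pow_eq_C, ← Polynomial.smul_eq_C_mul, Finsupp.single_apply]
      by_cases h : m = n
      · subst h
        simp [mul_comm]
      · have h' : n - 1 ≠ m - 1 := by omega
        simp [Polynomial.coeff_X_pow, h, h']

lemma Phi_injective (k : Type*) [Field k] (hchar : (2 : k) ≠ 0) :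
    Function.Injective (Phi k) := by
  intro x y hxy
  have h2 (n : ℕ) : (-2 : k) ^ n ≠ 0 := pow_ne_zero _ (neg_ne_zero.mpr hchar)
  ext ⟨s, n, hn⟩
  cases s
  · apply mul_left_cancel₀ (h2 (n - 1))
    rw [← fst_coeff_Phi, ← fst_coeff_Phi, hxy]
  · apply mul_left_cancel₀ (h2 (n - 1))
    rw [← snd_coeff_Phi, ← snd_coeff_Phi, hxy]

/-- The non-unital subalgebra of `A` generated by `X` and `ε`. -/
noncomputable abbrev genAlg (k : Type*) [Field k] : NonUnitalSubalgebra k (A k) :=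
  NonUnitalAlgebra.adjoin k {(TrivSqZeroExt.inl Polynomial.X : A k), (DualNumber.eps : A k)}

lemma inl_X_mem (k : Type*) [Field k] :
    (TrivSqZeroExt.inl Polynomial.X : A k) ∈ genAlg k :=
  NonUnitalAlgebra.subset_adjoin k (Set.mem_insert _ _)

lemma inl_X_pow_mem (k : Type*) [Field k] (n : ℕ) :
    (TrivSqZeroExt.inl (Polynomial.X ^ (n + 1)) : A k) ∈ genAlg k := by
  induction n with
  | zero => simpa using inl_X_mem k
  | succ n ih =>
    rw [pow_succ, TrivSqZeroExt.inl_mul]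
    exact mul_mem ih (inl_X_mem k)

lemma inr_X_pow_mem (k : Type*) [Field k] (n : ℕ) :
    (TrivSqZeroExt.inr (Polynomial.X ^ n) : A k) ∈ genAlg k := by
  induction n with
  | zero =>
    rw [pow_zero]
    exact NonUnitalAlgebra.subset_adjoin k (Set.mem_insert_of_mem _ rfl)
  | succ n ih =>
    rw [pow_succ', ← smul_eq_mul, ← TrivSqZeroExt.inl_mul_inr]
    exact mul_mem (inl_X_mem k) ih

lemma PhiB_mem (k : Type*) [Field k] (b : B) : PhiB k b ∈ genAlg k := by
  obtain ⟨s, n, hn⟩ := b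
  obtain ⟨n, rfl⟩ := Nat.exists_eq_add_of_le' hn
  cases s <;>
    simp only [PhiB, Nat.add_sub_cancel, neg_two_pow_eq_C, ← Polynomial.smul_eq_C_mul]
  · rw [TrivSqZeroExt.inl_smul]
    exact SMulMemClass.smul_mem _ (inl_X_pow_mem k n)
  · rw [TrivSqZeroExt.inr_smul]
    exact SMulMemClass.smul_mem _ (inr_X_pow_mem k n)

lemma Phi_mem (k : Type*) [Field k] (x : G k) : Phi k x ∈ genAlg k := by
  induction x using Finsupp.induction_linear with
  | zero => rw [map_zero]; exact zero_mem _
  | add x y hx hy => rw [map_add]; exact add_mem hx hy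
  | single b c => rw [Phi_single]; exact SMulMemClass.smul_mem _ (PhiB_mem k b)

lemma exists_of_mem (k : Type*) [Field k] (hchar : (2 : k) ≠ 0) (z : A k) (hz : z ∈ genAlg k) :
    ∃ x, Phi k x = z := by
  induction hz using NonUnitalAlgebra.adjoin_induction with
  | mem z hz =>
    rcases hz with rfl | rfl
    · exact ⟨e k 1, by simpa using Phi_e k 0⟩
    · exact ⟨f k 1, by simpa using Phi_f k 0⟩
  | add z w _ _ hz hw =>
    obtain ⟨x, rfl⟩ := hz
    obtain ⟨y, rfl⟩ := hw
    exact ⟨x + y, map_add _ _ _⟩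
  | zero => exact ⟨0, map_zero _⟩
  | mul z w _ _ hz hw =>
    obtain ⟨x, rfl⟩ := hz
    obtain ⟨y, rfl⟩ := hw
    exact ⟨mul k x y, Phi_mul k hchar x y⟩
  | smul c z _ hz =>
    obtain ⟨x, rfl⟩ := hz
    exact ⟨c • x, map_smul _ _ _⟩

/-- `Φ` is multiplicative (hence, being linear, a homomorphism of non-unital
`k`-algebras), injective, and its image is the non-unital subalgebra of `A` generated
by `X` and `ε`.  In particular `G` is isomorphic, as a non-unital commutative
`k`-algebra, to that subalgebra of `k[X][ε]/(ε²)`. -/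
theorem phi_embedding (k : Type*) [Field k] (hchar : (2 : k) ≠ 0) :
    (∀ x y : G k, Phi k (mul k x y) = Phi k x * Phi k y) ∧
      Function.Injective (Phi k) ∧
      Set.range (Phi k) =
        (NonUnitalAlgebra.adjoin k
          {(TrivSqZeroExt.inl Polynomial.X : A k), (DualNumber.eps : A k)} :
          NonUnitalSubalgebra k (A k)) := by
  refine ⟨Phi_mul k hchar, Phi_injective k hchar, Set.Subset.antisymm ?_ ?_⟩
  · rintro _ ⟨x, rfl⟩
    exact Phi_mem k x
  · exact fun z hz => exists_of_mem k hchar z hz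

end Stmt7
end

section
/- Set t_i := e_{1,i} and u_i := f_{1,i} for i ≥ 1. Then G is generated as a non-unital k-algebra by the set {t_i : i ≥ 1} ∪ {u_i : i ≥ 1}; that is, the smallest k-linear subspace of G containing this set and closed under multiplication is all of G. -/
/-!
Multiplication by `t_1 = e_{1,1}` raises the first index by one and lowers the second by one:
`e_{i,j+1} · e_{1,1} = -(1/2) e_{i+1,j}` and `f_{i,j+1} · e_{1,1} = -(1/2) f_{i+1,j}`.
It preserves the sum of the two indices, so `(i+1,j) ∈ I` with `i ≥ 1` forces `(i,j+1) ∈ I`.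
As `2` is invertible, induction on `i` starting from the generators `t_j`, `u_j` shows that every
basis vector lies in a subspace containing the generators and closed under multiplication
(`e_mem_and_f_mem`).
-/

/-!
Let `k` be a field with `char k ≠ 2`.  Let `I = {(i,j) ∈ ℤ × ℤ : i ≥ 1, i + j ≥ 2}` and
let `G` be the free `k`-vector space with basis
`{e_{i,j} : (i,j) ∈ I} ∪ {f_{i,j} : (i,j) ∈ I}` (the first component `false`/`true`
distinguishes the `e`/`f` family), equipped with the bilinear multiplication determined
on basis elements by `e_{i,k}·e_{j,l} = -(1/2)·e_{i+j,k+l-2}`,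
`e_{i,k}·f_{j,l} = f_{i,k}·e_{j,l} = -(1/2)·f_{i+j,k+l-2}`, `f_{i,k}·f_{j,l} = 0`
(the index constraints are preserved: if `(i,k), (j,l) ∈ I` then `(i+j, k+l-2) ∈ I`).

STATEMENT: with `t_i = e_{1,i}`, `u_i = f_{1,i}` (`i ≥ 1`), `G` is generated as a non-unital `k`-algebra by `{t_i} ∪ {u_i}`: the smallest `k`-linear subspace containing this set and closed under multiplication is all of `G`.
-/

namespace Stmt16

/-- The index set `I = {(i,j) ∈ ℤ × ℤ : i ≥ 1, i + j ≥ 2}`. -/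
abbrev I : Type := {p : ℤ × ℤ // 1 ≤ p.1 ∧ 2 ≤ p.1 + p.2}

/-- The basis: `(false, (i,j))` is `e_{i,j}`, `(true, (i,j))` is `f_{i,j}`. -/
abbrev B : Type := Bool × I

/-- The free vector space on `B`. -/
abbrev G (k : Type*) [Field k] : Type _ := B →₀ k

/-- `e_{i,j}` (zero if `(i,j) ∉ I`, but it is only used for `(i,j) ∈ I`). -/
noncomputable def e (k : Type*) [Field k] (i j : ℤ) : G k :=
  if h : 1 ≤ i ∧ 2 ≤ i + j then Finsupp.single (false, ⟨(i, j), h⟩) 1 else 0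

/-- `f_{i,j}` (zero if `(i,j) ∉ I`, but it is only used for `(i,j) ∈ I`). -/
noncomputable def f (k : Type*) [Field k] (i j : ℤ) : G k :=
  if h : 1 ≤ i ∧ 2 ≤ i + j then Finsupp.single (true, ⟨(i, j), h⟩) 1 else 0

/-- The product of two basis elements. -/
noncomputable def mulB (k : Type*) [Field k] : B → B → G k
  | (false, a), (false, b) => (-(1/2 : k)) • e k (a.1.1 + b.1.1) (a.1.2 + b.1.2 - 2)
  | (false, a), (true, b) => (-(1/2 : k)) • f k (a.1.1 + b.1.1) (a.1.2 + b.1.2 - 2)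
  | (true, a), (false, b) => (-(1/2 : k)) • f k (a.1.1 + b.1.1) (a.1.2 + b.1.2 - 2)
  | (true, _), (true, _) => 0

/-- Multiplication by the basis element `a` on the left, as a linear map. -/
noncomputable def mulRight (k : Type*) [Field k] (a : B) : G k →ₗ[k] G k :=
  Finsupp.lsum k fun b => LinearMap.toSpanSingleton k (G k) (mulB k a b)

/-- The bilinear multiplication on `G`, the unique bilinear extension of `mulB`. -/
noncomputable def mul (k : Type*) [Field k] : G k →ₗ[k] G k →ₗ[k] G k :=
  Finsupp.lsum k fun a => LinearMap.toSpanSingleton k (G k →ₗ[k] G k) (mulRight k a)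

/-- `t_i = e_{1,i}`. -/
noncomputable def t (k : Type*) [Field k] (i : ℤ) : G k := e k 1 i

/-- `u_i = f_{1,i}`. -/
noncomputable def u (k : Type*) [Field k] (i : ℤ) : G k := f k 1 i

theorem mul_single_single (k : Type*) [Field k] (a b : B) :
    mul k (Finsupp.single a 1) (Finsupp.single b 1) = mulB k a b := by
  simp [mul, mulRight]

theorem e_mul_t_one (k : Type*) [Field k] (i j : ℤ) (hi : 1 ≤ i) (hij : 2 ≤ i + (j + 1)) :
    mul k (e k i (j + 1)) (t k 1) = (-(1/2 : k)) • e k (i + 1) j := by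
  have h : e k i (j + 1) = Finsupp.single (false, ⟨(i, j + 1), hi, hij⟩) 1 := dif_pos ⟨hi, hij⟩
  have h1 : t k 1 = Finsupp.single (false, ⟨(1, 1), by norm_num⟩) 1 := by simp [t, e]
  rw [h, h1, mul_single_single, mulB]
  congr 2
  dsimp only
  ring

theorem f_mul_t_one (k : Type*) [Field k] (i j : ℤ) (hi : 1 ≤ i) (hij : 2 ≤ i + (j + 1)) :
    mul k (f k i (j + 1)) (t k 1) = (-(1/2 : k)) • f k (i + 1) j := by
  have h : f k i (j + 1) = Finsupp.single (true, ⟨(i, j + 1), hi, hij⟩) 1 := dif_pos ⟨hi, hij⟩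
  have h1 : t k 1 = Finsupp.single (false, ⟨(1, 1), by norm_num⟩) 1 := by simp [t, e]
  rw [h, h1, mul_single_single, mulB]
  congr 2
  dsimp only
  ring

theorem e_mem_and_f_mem (k : Type*) [Field k] (hchar : (2 : k) ≠ 0)
    (S : Submodule k (G k))
    (hgen : ∀ i : ℤ, 1 ≤ i → t k i ∈ S ∧ u k i ∈ S)
    (hmul : ∀ x y : G k, x ∈ S → y ∈ S → mul k x y ∈ S) (i : ℤ) (hi : 1 ≤ i) :
    ∀ j : ℤ, 2 ≤ i + j → e k i j ∈ S ∧ f k i j ∈ S := by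
  have hne : (-(1/2 : k)) ≠ 0 := neg_ne_zero.2 (one_div_ne_zero hchar)
  have ht : t k 1 ∈ S := (hgen 1 le_rfl).1
  induction i, hi using Int.leInduction with
  | base => exact fun j hj => hgen j (by omega)
  | succ i hi ih =>
    intro j hj
    have hij : 2 ≤ i + (j + 1) := by omega
    obtain ⟨he, hf⟩ := ih (j + 1) hij
    have hE := hmul _ _ he ht
    have hF := hmul _ _ hf ht
    rw [e_mul_t_one k i j hi hij] at hE
    rw [f_mul_t_one k i j hi hij] at hF
    exact ⟨(S.smul_mem_iff hne).1 hE, (S.smul_mem_iff hne).1 hF⟩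

/-- `G` is generated as a non-unital `k`-algebra by `{t_i : i ≥ 1} ∪ {u_i : i ≥ 1}`:
every `k`-linear subspace of `G` containing all the `t_i` and `u_i` (`i ≥ 1`) and closed
under multiplication is all of `G` (equivalently, the smallest such subspace is `G`). -/
theorem generated_by_t_u (k : Type*) [Field k] (hchar : (2 : k) ≠ 0)
    (S : Submodule k (G k))
    (hgen : ∀ i : ℤ, 1 ≤ i → t k i ∈ S ∧ u k i ∈ S)
    (hmul : ∀ x y : G k, x ∈ S → y ∈ S → mul k x y ∈ S) :
    S = ⊤ := by
  rw [eq_top_iff, ← (Finsupp.basisSingleOne (R := k) (ι := B)).span_eq, Submodule.span_le]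
  rintro _ ⟨⟨b, ⟨⟨i, j⟩, h⟩⟩, rfl⟩
  obtain ⟨he, hf⟩ := e_mem_and_f_mem k hchar S hgen hmul i h.1 j h.2
  rw [e, dif_pos h] at he
  rw [f, dif_pos h] at hf
  cases b
  · simpa using he
  · simpa using hf

end Stmt16
end

section
/- The linear span of all products x·y with x, y ∈ G equals the linear span of {e_{i,j} : (i,j) ∈ I, i ≥ 2} ∪ {f_{i,j} : (i,j) ∈ I, i ≥ 2}. Consequently, the images of the elements e_{1,j} and f_{1,j} (j ≥ 1) form a basis of the quotient G/G². -/
/-!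
Up to the invertible scalar `-1/2`, a product of basis elements is a basis element whose first
index is the sum of the two first indices, hence at least `2`; this bounds `G²` from above
(`mul_mem_upper`).  Conversely, for `i ≥ 2` and `i + j ≥ 2`,
`e_{i,j} = -2 e_{1,1} · e_{i-1,j+1}` and `f_{i,j} = -2 e_{1,1} · f_{i-1,j+1}`
(`upper_le_Gsq`).

For the quotient, reading off the coordinates with first index `1` is a linear map `lowCoord`
which kills `G²`, so it descends to `G/G²`, where it sends the family `quotFam` to the standard
basis; this gives linear independence.  The family spans because every basis element of `G`
either has first index `1` or lies in `G²`.
-/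

/-!
Let `k` be a field with `char k ≠ 2`.  Let `I = {(i,j) ∈ ℤ × ℤ : i ≥ 1, i + j ≥ 2}` and
let `G` be the free `k`-vector space with basis
`{e_{i,j} : (i,j) ∈ I} ∪ {f_{i,j} : (i,j) ∈ I}` (the first component `false`/`true`
distinguishes the `e`/`f` family), equipped with the bilinear multiplication determined
on basis elements by `e_{i,k}·e_{j,l} = -(1/2)·e_{i+j,k+l-2}`,
`e_{i,k}·f_{j,l} = f_{i,k}·e_{j,l} = -(1/2)·f_{i+j,k+l-2}`, `f_{i,k}·f_{j,l} = 0`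
(the index constraints are preserved: if `(i,k), (j,l) ∈ I` then `(i+j, k+l-2) ∈ I`).

STATEMENT: the span of all products `x·y` equals the span of `{e_{i,j}, f_{i,j} : (i,j) ∈ I, i ≥ 2}`, and the images of the `e_{1,j}` and `f_{1,j}` (`j ≥ 1`) form a basis (linearly independent and spanning) of `G/G²`.
-/

namespace Stmt17

/-- The index set `I = {(i,j) ∈ ℤ × ℤ : i ≥ 1, i + j ≥ 2}`. -/
abbrev I : Type := {p : ℤ × ℤ // 1 ≤ p.1 ∧ 2 ≤ p.1 + p.2}

/-- The basis: `(false, (i,j))` is `e_{i,j}`, `(true, (i,j))` is `f_{i,j}`. -/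
abbrev B : Type := Bool × I

/-- The free vector space on `B`. -/
abbrev G (k : Type*) [Field k] : Type _ := B →₀ k

/-- `e_{i,j}` (zero if `(i,j) ∉ I`, but it is only used for `(i,j) ∈ I`). -/
noncomputable def e (k : Type*) [Field k] (i j : ℤ) : G k :=
  if h : 1 ≤ i ∧ 2 ≤ i + j then Finsupp.single (false, ⟨(i, j), h⟩) 1 else 0

/-- `f_{i,j}` (zero if `(i,j) ∉ I`, but it is only used for `(i,j) ∈ I`). -/
noncomputable def f (k : Type*) [Field k] (i j : ℤ) : G k :=
  if h : 1 ≤ i ∧ 2 ≤ i + j then Finsupp.single (true, ⟨(i, j), h⟩) 1 else 0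

/-- The product of two basis elements. -/
noncomputable def mulB (k : Type*) [Field k] : B → B → G k
  | (false, a), (false, b) => (-(1/2 : k)) • e k (a.1.1 + b.1.1) (a.1.2 + b.1.2 - 2)
  | (false, a), (true, b) => (-(1/2 : k)) • f k (a.1.1 + b.1.1) (a.1.2 + b.1.2 - 2)
  | (true, a), (false, b) => (-(1/2 : k)) • f k (a.1.1 + b.1.1) (a.1.2 + b.1.2 - 2)
  | (true, _), (true, _) => 0

/-- Multiplication by the basis element `a` on the left, as a linear map. -/
noncomputable def mulRight (k : Type*) [Field k] (a : B) : G k →ₗ[k] G k :=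
  Finsupp.lsum k fun b => LinearMap.toSpanSingleton k (G k) (mulB k a b)

/-- The bilinear multiplication on `G`, the unique bilinear extension of `mulB`. -/
noncomputable def mul (k : Type*) [Field k] : G k →ₗ[k] G k →ₗ[k] G k :=
  Finsupp.lsum k fun a => LinearMap.toSpanSingleton k (G k →ₗ[k] G k) (mulRight k a)

/-- `G²`: the linear span of all products of two elements of `G`. -/
noncomputable def Gsq (k : Type*) [Field k] : Submodule k (G k) :=
  Submodule.span k {z : G k | ∃ x y : G k, z = mul k x y}

/-- The images of the elements `e_{1,j}` and `f_{1,j}` (`j ≥ 1`) in `G/G²`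
(`(false, j) ↦ e_{1,j}`, `(true, j) ↦ f_{1,j}`). -/
noncomputable def quotFam (k : Type*) [Field k] :
    Bool × {j : ℤ // 1 ≤ j} → G k ⧸ Gsq k := fun b =>
  Submodule.Quotient.mk (if b.1 then f k 1 b.2.1 else e k 1 b.2.1)

/-- The span of the `e_{i,j}` and `f_{i,j}` with `i ≥ 2` and `i + j ≥ 2`. -/
noncomputable def upper (k : Type*) [Field k] : Submodule k (G k) :=
  Submodule.span k
    {z : G k | ∃ i j : ℤ, 2 ≤ i ∧ 2 ≤ i + j ∧ (z = e k i j ∨ z = f k i j)}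

lemma mul_single (k : Type*) [Field k] (a b : B) (r s : k) :
    mul k (Finsupp.single a r) (Finsupp.single b s) = r • s • mulB k a b := by
  simp [mul, mulRight]

lemma mulB_mem_upper (k : Type*) [Field k] (a b : B) : mulB k a b ∈ upper k := by
  obtain ⟨s, ⟨⟨i, p⟩, hi, hp⟩⟩ := a
  obtain ⟨t, ⟨⟨j, q⟩, hj, hq⟩⟩ := b
  simp only at hi hp hj hq
  have key : ∀ z : G k, z = e k (i + j) (p + q - 2) ∨ z = f k (i + j) (p + q - 2) →
      z ∈ upper k := fun z hz =>
    Submodule.subset_span ⟨i + j, p + q - 2, by omega, by omega, hz⟩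
  cases s <;> cases t
  · exact Submodule.smul_mem _ _ (key _ (Or.inl rfl))
  · exact Submodule.smul_mem _ _ (key _ (Or.inr rfl))
  · exact Submodule.smul_mem _ _ (key _ (Or.inr rfl))
  · exact Submodule.zero_mem _

lemma mul_mem_upper (k : Type*) [Field k] (x y : G k) : mul k x y ∈ upper k := by
  induction x using Finsupp.induction_linear with
  | zero => simp
  | add x₁ x₂ h₁ h₂ =>
    rw [map_add, LinearMap.add_apply]
    exact Submodule.add_mem _ h₁ h₂
  | single a r =>
    induction y using Finsupp.induction_linear with
    | zero => simp
    | add y₁ y₂ h₁ h₂ =>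
      rw [map_add]
      exact Submodule.add_mem _ h₁ h₂
    | single b s =>
      rw [mul_single]
      exact Submodule.smul_mem _ _ (Submodule.smul_mem _ _ (mulB_mem_upper k a b))

lemma upper_le_Gsq (k : Type*) [Field k] (hchar : (2 : k) ≠ 0) : upper k ≤ Gsq k := by
  refine Submodule.span_le.2 ?_
  rintro z ⟨i, j, hi, hij, hz⟩
  -- `z` is `-2` times the product of `e_{1,1}` with the element of index `(i-1, j+1)`.
  have h11 : (1 : ℤ) ≤ 1 ∧ (2 : ℤ) ≤ 1 + 1 := by omega
  have hI : 1 ≤ i - 1 ∧ 2 ≤ (i - 1) + (j + 1) := by omega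
  have hs : (-2 : k) * -(1 / 2) = 1 := by field_simp
  have e₁ : 1 + (i - 1) = i := by ring
  have e₂ : 1 + (j + 1) - 2 = j := by ring
  rcases hz with rfl | rfl
  · refine Submodule.subset_span ⟨Finsupp.single (false, ⟨(1, 1), h11⟩) (-2),
      Finsupp.single (false, ⟨(i - 1, j + 1), hI⟩) 1, ?_⟩
    rw [mul_single, one_smul, mulB, smul_smul, hs, one_smul, e₁, e₂]
  · refine Submodule.subset_span ⟨Finsupp.single (false, ⟨(1, 1), h11⟩) (-2),
      Finsupp.single (true, ⟨(i - 1, j + 1), hI⟩) 1, ?_⟩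
    rw [mul_single, one_smul, mulB, smul_smul, hs, one_smul, e₁, e₂]

lemma Gsq_eq_upper (k : Type*) [Field k] (hchar : (2 : k) ≠ 0) : Gsq k = upper k := by
  refine le_antisymm (Submodule.span_le.2 ?_) (upper_le_Gsq k hchar)
  rintro z ⟨x, y, rfl⟩
  exact mul_mem_upper k x y

/-- The position in the basis of `G` of the elements with first index `1`:
`(false, j)` stands for `e_{1,j}` and `(true, j)` for `f_{1,j}`. -/
def low (b : Bool × {j : ℤ // 1 ≤ j}) : B :=
  (b.1, ⟨(1, b.2.1), le_rfl, by have := b.2.2; simp only; omega⟩)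

/-- The coordinates of a vector of `G` along the `e_{1,j}` and `f_{1,j}`.  The target is the
full function space, so that no finiteness of support has to be carried along. -/
def lowCoord (k : Type*) [Field k] : G k →ₗ[k] (Bool × {j : ℤ // 1 ≤ j} → k) where
  toFun x b := x (low b)
  map_add' _ _ := rfl
  map_smul' _ _ := rfl

lemma upper_le_ker (k : Type*) [Field k] : upper k ≤ LinearMap.ker (lowCoord k) := by
  refine Submodule.span_le.2 ?_
  rintro z ⟨i, j, hi, hij, hz⟩
  have h : 1 ≤ i ∧ 2 ≤ i + j := by omega
  have h1 : i ≠ 1 := by omega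
  refine LinearMap.mem_ker.2 (funext fun b => ?_)
  rcases hz with rfl | rfl
  · simp [lowCoord, low, e, h, h1]
  · simp [lowCoord, low, f, h, h1]

lemma quotFam_eq (k : Type*) [Field k] (b : Bool × {j : ℤ // 1 ≤ j}) :
    quotFam k b = (Gsq k).mkQ (Finsupp.single (low b) 1) := by
  obtain ⟨s, j, hj⟩ := b
  have h : (2 : ℤ) ≤ 1 + j := by omega
  cases s <;> simp [quotFam, low, e, f, h]

lemma lowCoord_single_low (k : Type*) [Field k] (b : Bool × {j : ℤ // 1 ≤ j}) :
    lowCoord k (Finsupp.single (low b) 1) = Pi.single b 1 := by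
  have hlow : Function.Injective low := by
    rintro ⟨s, i, hi⟩ ⟨t, j, hj⟩ h
    simpa [low] using h
  funext c
  change (Finsupp.single (low b) (1 : k)) (low c) = _
  simp only [Finsupp.single_apply, Pi.single_apply, hlow.eq_iff, eq_comm]

lemma quotFam_linearIndependent (k : Type*) [Field k] (hchar : (2 : k) ≠ 0) :
    LinearIndependent k (quotFam k) := by
  have hker : Gsq k ≤ LinearMap.ker (lowCoord k) :=
    (Gsq_eq_upper k hchar).trans_le (upper_le_ker k)
  refine LinearIndependent.of_comp ((Gsq k).liftQ (lowCoord k) hker) ?_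
  have hcomp : (Gsq k).liftQ (lowCoord k) hker ∘ quotFam k = fun b => Pi.single b 1 := by
    funext b
    rw [Function.comp_apply, quotFam_eq, Submodule.mkQ_apply, Submodule.liftQ_apply,
      lowCoord_single_low]
  rw [hcomp]
  exact Pi.linearIndependent_single_one _ k

lemma quotFam_span (k : Type*) [Field k] (hchar : (2 : k) ≠ 0) :
    Submodule.span k (Set.range (quotFam k)) = ⊤ := by
  refine Submodule.eq_top_iff'.2 fun q => ?_
  obtain ⟨x, rfl⟩ := (Gsq k).mkQ_surjective q
  induction x using Finsupp.induction_linear with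
  | zero => simp
  | add x y hx hy =>
    rw [map_add]
    exact Submodule.add_mem _ hx hy
  | single a r =>
    rw [← mul_one r, ← smul_eq_mul, ← Finsupp.smul_single, map_smul]
    refine Submodule.smul_mem _ _ ?_
    obtain ⟨s, ⟨⟨i, j⟩, hi, hij⟩⟩ := a
    simp only at hi hij
    rcases hi.eq_or_lt with rfl | h2
    · exact Submodule.subset_span ⟨(s, ⟨j, by omega⟩), quotFam_eq k _⟩
    · -- A basis element with first index at least `2` vanishes in the quotient.
      have hmem : (Finsupp.single (s, ⟨(i, j), hi, hij⟩) 1 : G k) ∈ Gsq k := by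
        refine upper_le_Gsq k hchar (Submodule.subset_span ⟨i, j, h2, hij, ?_⟩)
        cases s
        · exact Or.inl (by simp [e, hi, hij])
        · exact Or.inr (by simp [f, hi, hij])
      rw [Submodule.mkQ_apply, (Submodule.Quotient.mk_eq_zero _).2 hmem]
      exact Submodule.zero_mem _

/-- `G²` is the span of `{e_{i,j} : (i,j) ∈ I, i ≥ 2} ∪ {f_{i,j} : (i,j) ∈ I, i ≥ 2}`,
and the images of the `e_{1,j}` and `f_{1,j}` (`j ≥ 1`) are linearly independent and
span the quotient `G/G²`, i.e. they form a basis. -/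
theorem span_products (k : Type*) [Field k] (hchar : (2 : k) ≠ 0) :
    Gsq k = Submodule.span k
        {z : G k | ∃ i j : ℤ, 2 ≤ i ∧ 2 ≤ i + j ∧ (z = e k i j ∨ z = f k i j)} ∧
      LinearIndependent k (quotFam k) ∧
      Submodule.span k (Set.range (quotFam k)) = ⊤ :=
  ⟨Gsq_eq_upper k hchar, quotFam_linearIndependent k hchar, quotFam_span k hchar⟩

end Stmt17
end
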